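/- Let 0 < α < ν. Then the sequence {J_ν(x j_{n,α})}_{n≥1}, where j_{n,α} is the n-th positive zero of the Bessel function J_α, is complete in L^1(0,1): if y ∈ L^1(0,1) and ∫_0^1 y(x) J_ν(x j_{n,α}) dx = 0 for all n ≥ 1, then y = 0 a.e. -/

import Mathlib

open MeasureTheory Set

/-- The classical Bessel function of the first kind of order `ν`, defined by its power
series (for positive arguments, via real powers). -/
noncomputable def besselJ (ν x : ℝ) : ℝ :=
  ∑' n : ℕ, (-1 : ℝ) ^ n / (n.factorial * Real.Gamma (ν + n + 1)) * (x / 2) ^ (ν + 2 * (n : ℝ))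


/-- Power series with given coefficients. -/
noncomputable def PS (c : ℕ → ℂ) (w : ℂ) : ℂ := ∑' k, c k * w ^ k

/-- coefficient bound guaranteeing that the series is entire of exponential type. -/
def FacBdd (c : ℕ → ℂ) : Prop := ∃ C : ℝ, ∀ k, ‖c k‖ ≤ C / k.factorial

lemma FacBdd.norm_summable {c : ℕ → ℂ} (h : FacBdd c) (w : ℂ) :
    Summable (fun k => ‖c k * w ^ k‖) := by
  obtain ⟨C, hC⟩ := h
  refine Summable.of_nonneg_of_le (fun _ => norm_nonneg _) (fun k => ?_)
    ((Real.summable_pow_div_factorial ‖w‖).mul_left C)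
  rw [norm_mul, norm_pow]
  calc ‖c k‖ * ‖w‖ ^ k ≤ C / k.factorial * ‖w‖ ^ k := by gcongr; exact hC k
    _ = _ := by ring

lemma FacBdd.hasSum {c : ℕ → ℂ} (h : FacBdd c) (w : ℂ) :
    HasSum (fun k => c k * w ^ k) (PS c w) := (h.norm_summable w).of_norm.hasSum

/-- derivative coefficients -/
noncomputable def dcoef (c : ℕ → ℂ) : ℕ → ℂ := fun k => (k + 1) * c (k + 1)

lemma FacBdd.facDeriv {c : ℕ → ℂ} (h : FacBdd c) : FacBdd (dcoef c) := by
  obtain ⟨C, hC⟩ := h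
  refine ⟨C, fun k => ?_⟩
  have := hC (k + 1)
  have hn : ‖((k : ℂ) + 1)‖ = (k : ℝ) + 1 := by
    have : ((k : ℂ) + 1) = ((k + 1 : ℕ) : ℂ) := by push_cast; rfl
    rw [this, Complex.norm_natCast]; push_cast; rfl
  unfold dcoef
  rw [norm_mul, hn]
  calc ((k : ℝ) + 1) * ‖c (k + 1)‖ ≤ (k + 1) * (C / (k + 1).factorial) := by gcongr
    _ = C / k.factorial := by
      rw [Nat.factorial_succ]; push_cast; field_simp

lemma FacBdd.hasDerivAt {c : ℕ → ℂ} (h : FacBdd c) (w : ℂ) :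
    HasDerivAt (PS c) (PS (dcoef c) w) w := by
  have key : HasDerivAt (fun z => ∑' k, c k * z ^ k) (∑' k, c k * (k * w ^ (k - 1))) w := by
    set R := ‖w‖ + 1
    have hsum : Summable (fun k : ℕ => ‖c k‖ * (k * R ^ (k - 1))) := by
      rw [← summable_nat_add_iff 1]
      refine (h.facDeriv.norm_summable (R : ℂ)).congr (fun k => ?_)
      have hn : ‖((k : ℂ) + 1)‖ = (k : ℝ) + 1 := by
        have : ((k : ℂ) + 1) = ((k + 1 : ℕ) : ℂ) := by push_cast; rfl
        rw [this, Complex.norm_natCast]; push_cast; rfl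
      have hR : ‖(R : ℂ)‖ = R := by
        rw [Complex.norm_real, Real.norm_of_nonneg]; positivity
      simp only [dcoef, norm_mul, norm_pow, hR, hn, Nat.add_sub_cancel]
      push_cast; ring
    refine hasDerivAt_tsum_of_isPreconnected (t := Metric.ball 0 R) (y₀ := w) hsum
      Metric.isOpen_ball (convex_ball _ _).isPreconnected
      (g := fun k z => c k * z ^ k) (g' := fun k z => c k * (k * z ^ (k - 1))) ?_ ?_ ?_ ?_ ?_
    · intro n z _
      exact (hasDerivAt_pow n z).const_mul (c n)
    · intro n z hz
      rw [norm_mul, norm_mul, norm_pow, Complex.norm_natCast]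
      have : ‖z‖ ≤ R := by simpa using (Metric.mem_ball.1 hz).le
      gcongr
    · simp [R]
    · exact (h.norm_summable w).of_norm
    · simp [R]
  have e : (∑' k, c k * (k * w ^ (k - 1))) = PS (dcoef c) w := by
    have hs : Summable (fun k : ℕ => c k * (k * w ^ (k - 1))) := by
      rw [← summable_nat_add_iff 1]
      refine (h.facDeriv.norm_summable w).of_norm.congr (fun k => ?_)
      simp only [dcoef, Nat.add_sub_cancel]; push_cast; ring
    rw [hs.tsum_eq_zero_add]
    simp only [PS, dcoef, Nat.add_sub_cancel]
    push_cast
    simp only [zero_mul, mul_zero, zero_add]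
    exact tsum_congr fun k => by ring
  rw [← e]; exact key

lemma FacBdd.differentiable {c : ℕ → ℂ} (h : FacBdd c) : Differentiable ℂ (PS c) :=
  fun w => (h.hasDerivAt w).differentiableAt

lemma PS_zero (c : ℕ → ℂ) : PS c 0 = c 0 := by
  unfold PS
  rw [tsum_eq_single 0]
  · simp
  · intro k hk; simp [hk]

lemma PS_unique (k : ℕ) : ∀ {c : ℕ → ℂ}, FacBdd c → (∀ w, PS c w = 0) → c k = 0 := by
  induction k with
  | zero => intro c _ h; rw [← PS_zero c]; exact h 0
  | succ k ih =>
    intro c hc h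
    have h2 : ∀ w, PS (dcoef c) w = 0 := by
      intro w
      have h1 := hc.hasDerivAt w
      have : PS c = fun _ => 0 := funext h
      rw [this] at h1
      exact h1.unique (hasDerivAt_const w 0)
    have := ih hc.facDeriv h2
    unfold dcoef at this
    rcases mul_eq_zero.1 this with h3 | h3
    · exact absurd h3 (Nat.cast_add_one_ne_zero k)
    · exact h3

/-- The normalized Bessel coefficients. -/
noncomputable def bA (a : ℝ) (k : ℕ) : ℝ := (-1) ^ k / (k.factorial * Real.Gamma (a + k + 1))

lemma Gamma_ge {a : ℝ} (ha : 0 < a) (k : ℕ) : Real.Gamma (a + 1) ≤ Real.Gamma (a + k + 1) := by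
  induction k with
  | zero => simp
  | succ k ih =>
    have : a + (k + 1 : ℕ) + 1 = (a + k + 1) + 1 := by push_cast; ring
    rw [this, Real.Gamma_add_one (s := a + k + 1) (by positivity)]
    have h1 : 0 < Real.Gamma (a + k + 1) := Real.Gamma_pos_of_pos (by positivity)
    have : (0:ℝ) ≤ k := by positivity
    nlinarith

lemma abs_bA_le {a : ℝ} (ha : 0 < a) (k : ℕ) :
    |bA a k| ≤ (1 / Real.Gamma (a + 1)) / k.factorial := by
  have h0 : 0 < Real.Gamma (a + 1) := Real.Gamma_pos_of_pos (by positivity)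
  have h1 := Gamma_ge ha k
  have h2 : (0:ℝ) < k.factorial := by positivity
  unfold bA
  rw [abs_div, abs_pow, abs_neg, abs_one, one_pow,
    abs_of_pos (mul_pos h2 (h0.trans_le h1)), div_div, mul_comm (Real.Gamma (a+1))]
  gcongr

lemma facBdd_bA {a : ℝ} (ha : 0 < a) : FacBdd (fun k => (bA a k : ℂ)) :=
  ⟨_, fun k => by rw [Complex.norm_real]; exact abs_bA_le ha k⟩

/-- The normalized Bessel function. -/
noncomputable def gB (a : ℝ) : ℂ → ℂ := PS (fun k => (bA a k : ℂ))

lemma bA_deriv {a : ℝ} (k : ℕ) : ((k : ℝ) + 1) * bA a (k + 1) = - bA (a + 1) k := by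
  unfold bA
  have : a + (k + 1 : ℕ) + 1 = a + 1 + k + 1 := by push_cast; ring
  rw [this, Nat.factorial_succ, pow_succ]
  push_cast
  field_simp

lemma bA_step {a : ℝ} (ha : 0 < a) (k : ℕ) : (a + k + 1) * bA (a + 1) k = bA a k := by
  unfold bA
  have : a + 1 + k + 1 = (a + k + 1) + 1 := by ring
  have h1 : 0 < Real.Gamma (a + k + 1) := Real.Gamma_pos_of_pos (by positivity)
  have h2 : 0 < a + k + 1 := by positivity
  rw [this, Real.Gamma_add_one h2.ne']
  field_simp

lemma gB_deriv {a : ℝ} (ha : 0 < a) (w : ℂ) : HasDerivAt (gB a) (-gB (a + 1) w) w := by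
  have h := (facBdd_bA ha).hasDerivAt w
  suffices e : -gB (a + 1) w = PS (dcoef (fun k => (bA a k : ℂ))) w by
    rw [e]; exact h
  unfold gB PS dcoef
  rw [← tsum_neg]
  refine tsum_congr fun k => ?_
  have := congrArg (fun x : ℝ => (x : ℂ)) (bA_deriv (a := a) k)
  push_cast at this
  rw [this]; ring

lemma gB_ode {a : ℝ} (ha : 0 < a) (w : ℂ) :
    w * (-gB (a + 2) w) + (a + 1) * gB (a + 1) w = gB a w := by
  have ha1 : 0 < a + 1 := by linarith
  have h := (facBdd_bA ha1).facDeriv.hasSum w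
  have e : PS (dcoef (fun k => (bA (a + 1) k : ℂ))) w = -gB (a + 2) w := by
    have := gB_deriv ha1 w
    rw [show a + 1 + 1 = a + 2 by ring] at this
    exact ((facBdd_bA ha1).hasDerivAt w).unique this
  rw [e] at h
  have h1 : HasSum (fun k : ℕ => (k : ℂ) * bA (a + 1) k * w ^ k) (w * (-gB (a + 2) w)) := by
    rw [← hasSum_nat_add_iff' 1]
    simp only [Finset.sum_range_one, Nat.cast_zero, zero_mul, sub_zero]
    refine (h.mul_left w).congr_fun (fun k => ?_) |> fun x => x
    unfold dcoef; push_cast; ring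
  have h2 := h1.add (((facBdd_bA ha1).hasSum w).mul_left ((a : ℂ) + 1))
  refine h2.unique ?_
  refine ((facBdd_bA ha).hasSum w).congr_fun (fun k => ?_)
  have := congrArg (fun x : ℝ => (x : ℂ)) (bA_step ha k)
  push_cast at this
  rw [← this]; ring

lemma gB_line_deriv {a : ℝ} (ha : 0 < a) (w : ℂ) (t : ℝ) :
    HasDerivAt (fun s : ℝ => gB a (s * w)) (-w * gB (a + 1) (t * w)) t := by
  have h1 : HasDerivAt (fun s : ℝ => (s : ℂ) * w) w t := by
    simpa using (Complex.ofRealCLM.hasDerivAt (x := t)).mul_const w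
  have := (gB_deriv ha (t * w)).comp t h1
  refine this.congr_deriv ?_
  ring

lemma re_deriv {f : ℝ → ℂ} {f' : ℂ} {t : ℝ} (h : HasDerivAt f f' t) :
    HasDerivAt (fun s => (f s).re) f'.re t :=
  (Complex.reCLM.hasFDerivAt.comp_hasDerivAt t h)

lemma im_deriv {f : ℝ → ℂ} {f' : ℂ} {t : ℝ} (h : HasDerivAt f f' t) :
    HasDerivAt (fun s => (f s).im) f'.im t :=
  (Complex.imCLM.hasFDerivAt.comp_hasDerivAt t h)

/-- energy function -/
noncomputable def enN (a : ℝ) (w : ℂ) (t : ℝ) : ℝ :=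
  t ^ (a + 1) * ((w * gB (a + 1) (t * w) * (starRingEnd ℂ) (gB a (t * w))).im / w.im)

noncomputable def enL (a : ℝ) (w : ℂ) (t : ℝ) : ℝ :=
  enN a w t - (a + 1) * (t ^ (a + 1) * Complex.normSq (gB (a + 1) (t * w)))

lemma enN_deriv {a : ℝ} (ha : 0 < a) {w : ℂ} (hw : w.im ≠ 0) {t : ℝ} (ht : 0 < t) :
    HasDerivAt (enN a w) (t ^ a * Complex.normSq (gB a (t * w))) t := by
  have hv := gB_line_deriv ha w t
  have hp := gB_line_deriv (a := a + 1) (by linarith) w t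
  rw [show a + 1 + 1 = a + 2 by ring] at hp
  have hode := gB_ode ha (t * w)
  have hpow : HasDerivAt (fun s : ℝ => s ^ (a + 1)) ((a + 1) * t ^ a) t := by
    have := Real.hasDerivAt_rpow_const (x := t) (p := a + 1) (Or.inl ht.ne')
    simpa using this
  have e : t ^ (a + 1) = t ^ a * t := by rw [Real.rpow_add ht, Real.rpow_one]
  have vr := re_deriv hv
  have vi := im_deriv hv
  have pr := re_deriv hp
  have pi := im_deriv hp
  have hr := congrArg Complex.re hode
  have hi := congrArg Complex.im hode
  have key := hpow.mul (((((pi.const_mul w.re).add (pr.const_mul w.im)).mul vr).sub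
    (((pr.const_mul w.re).sub (pi.const_mul w.im)).mul vi)).div_const w.im)
  have hfun : enN a w = (fun s : ℝ => s ^ (a + 1)) * (fun s : ℝ =>
     (((w.re * (gB (a + 1) (s * w)).im + w.im * (gB (a + 1) (s * w)).re) * (gB a (s * w)).re) -
      ((w.re * (gB (a + 1) (s * w)).re - w.im * (gB (a + 1) (s * w)).im) * (gB a (s * w)).im))
        / w.im) := by
    funext s
    simp only [enN, Pi.mul_apply, Complex.mul_im, Complex.mul_re, Complex.conj_re, Complex.conj_im]
    ring
  rw [hfun]
  refine key.congr_deriv ?_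
  simp only [Pi.add_apply, Pi.sub_apply, Pi.mul_apply]
  rw [e]
  simp only [Complex.normSq_apply, Complex.mul_im, Complex.mul_re, Complex.neg_re, Complex.neg_im,
    Complex.add_re, Complex.add_im, Complex.ofReal_re, Complex.ofReal_im, Complex.one_re,
    Complex.one_im] at hr hi ⊢
  generalize gB a (t * w) = V at *
  generalize gB (a + 1) (t * w) = P at *
  generalize gB (a + 2) (t * w) = Q at *
  rw [← hr, ← hi]
  field_simp
  ring

lemma enL_deriv {a : ℝ} (ha : 0 < a) {w : ℂ} (hw : w.im ≠ 0) {t : ℝ} (ht : 0 < t) :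
    HasDerivAt (enL a w)
      (t ^ a * Complex.normSq (gB a (t * w) - (a + 1) * gB (a + 1) (t * w))) t := by
  have hp := gB_line_deriv (a := a + 1) (by linarith) w t
  rw [show a + 1 + 1 = a + 2 by ring] at hp
  have hode := gB_ode ha (t * w)
  have hpow : HasDerivAt (fun s : ℝ => s ^ (a + 1)) ((a + 1) * t ^ a) t := by
    have := Real.hasDerivAt_rpow_const (x := t) (p := a + 1) (Or.inl ht.ne')
    simpa using this
  have e : t ^ (a + 1) = t ^ a * t := by rw [Real.rpow_add ht, Real.rpow_one]
  have pr := re_deriv hp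
  have pi := im_deriv hp
  have hr := congrArg Complex.re hode
  have hi := congrArg Complex.im hode
  have key := (enN_deriv ha hw ht).sub ((hpow.mul ((pr.mul pr).add (pi.mul pi))).const_mul (a + 1))
  refine (key.congr_deriv ?_).congr_of_eventuallyEq (Filter.Eventually.of_forall ?_)
  · simp only [Pi.add_apply, Pi.sub_apply, Pi.mul_apply]
    rw [e]
    simp only [Complex.normSq_apply, Complex.mul_im, Complex.mul_re, Complex.neg_re, Complex.neg_im,
      Complex.add_re, Complex.add_im, Complex.sub_re, Complex.sub_im, Complex.ofReal_re,
      Complex.ofReal_im, Complex.one_re, Complex.one_im] at hr hi ⊢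
    generalize gB a (t * w) = V at *
    generalize gB (a + 1) (t * w) = P at *
    generalize gB (a + 2) (t * w) = Q at *
    rw [← hr, ← hi]
    ring
  · intro s
    simp [enL, Complex.normSq_apply]

lemma gB_cont {a : ℝ} (ha : 0 < a) : Continuous (gB a) :=
  (facBdd_bA ha).differentiable.continuous

lemma enN_cont {a : ℝ} (ha : 0 < a) (w : ℂ) : Continuous (enN a w) := by
  unfold enN
  have h1 := gB_cont ha
  have h2 := gB_cont (a := a + 1) (by linarith)
  have h3 : Continuous (fun t : ℝ => t ^ (a + 1)) := Real.continuous_rpow_const (by linarith)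
  have h4 : Continuous (fun t : ℝ => (t : ℂ) * w) := by fun_prop
  have h5 := h1.comp h4
  have h6 := h2.comp h4
  refine h3.mul (Continuous.div_const (Complex.continuous_im.comp ?_) _)
  exact (continuous_const.mul h6).mul (Complex.continuous_conj.comp h5)

lemma enL_cont {a : ℝ} (ha : 0 < a) (w : ℂ) : Continuous (enL a w) := by
  unfold enL
  have h2 := gB_cont (a := a + 1) (by linarith)
  have h3 : Continuous (fun t : ℝ => t ^ (a + 1)) := Real.continuous_rpow_const (by linarith)
  have h4 : Continuous (fun t : ℝ => (t : ℂ) * w) := by fun_prop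
  have h6 := h2.comp h4
  exact (enN_cont ha w).sub (continuous_const.mul (h3.mul (Complex.continuous_normSq.comp h6)))

lemma enN_mono {a : ℝ} (ha : 0 < a) {w : ℂ} (hw : w.im ≠ 0) : MonotoneOn (enN a w) (Ici 0) := by
  refine monotoneOn_of_deriv_nonneg (convex_Ici 0) (enN_cont ha w).continuousOn ?_ ?_ <;>
    rw [interior_Ici]
  · exact fun t ht => (enN_deriv ha hw ht).differentiableAt.differentiableWithinAt
  · intro t ht
    rw [(enN_deriv ha hw ht).deriv]
    exact mul_nonneg (Real.rpow_nonneg (le_of_lt ht) _) (Complex.normSq_nonneg _)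

lemma enL_mono {a : ℝ} (ha : 0 < a) {w : ℂ} (hw : w.im ≠ 0) : MonotoneOn (enL a w) (Ici 0) := by
  refine monotoneOn_of_deriv_nonneg (convex_Ici 0) (enL_cont ha w).continuousOn ?_ ?_ <;>
    rw [interior_Ici]
  · exact fun t ht => (enL_deriv ha hw ht).differentiableAt.differentiableWithinAt
  · intro t ht
    rw [(enL_deriv ha hw ht).deriv]
    exact mul_nonneg (Real.rpow_nonneg (le_of_lt ht) _) (Complex.normSq_nonneg _)

lemma enL_nonneg {a : ℝ} (ha : 0 < a) {w : ℂ} (hw : w.im ≠ 0) {t : ℝ} (ht : 0 ≤ t) :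
    0 ≤ enL a w t := by
  have := enL_mono ha hw (mem_Ici.2 le_rfl) ht ht
  refine le_trans (le_of_eq ?_) this
  have : (0:ℝ) ^ (a + 1) = 0 := Real.zero_rpow (by linarith)
  simp [enL, enN, this]

lemma enN_one_le {a : ℝ} {w : ℂ} :
    enN a w 1 ≤ ‖w‖ / |w.im| * ‖gB (a + 1) w‖ * ‖gB a w‖ := by
  have h := Complex.abs_im_le_norm (w * gB (a + 1) w * (starRingEnd ℂ) (gB a w))
  rw [norm_mul, norm_mul, RCLike.norm_conj] at h
  have : enN a w 1 = (w * gB (a + 1) w * (starRingEnd ℂ) (gB a w)).im / w.im := by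
    simp [enN]
  rw [this]
  refine (le_abs_self _).trans ?_
  rw [abs_div]
  calc _ ≤ (‖w‖ * ‖gB (a + 1) w‖ * ‖gB a w‖) / |w.im| := by gcongr
    _ = _ := by ring

lemma gB_succ_le {a : ℝ} (ha : 0 < a) {w : ℂ} (hw : w.im ≠ 0) :
    ‖gB (a + 1) w‖ ≤ ‖w‖ / |w.im| * ‖gB a w‖ := by
  have h1 := enL_nonneg ha hw zero_le_one
  have h2 := enN_one_le (a := a) (w := w)
  unfold enL at h1
  simp only [Real.one_rpow, one_mul, Complex.ofReal_one, Complex.normSq_eq_norm_sq] at h1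
  by_contra! hc
  have hpos : 0 < ‖gB (a + 1) w‖ := lt_of_le_of_lt (by positivity) hc
  nlinarith [mul_pos hpos (sub_pos.2 hc), mul_pos ha (pow_pos hpos 2)]

lemma gB_succ_pt {a : ℝ} (ha : 0 < a) {w : ℂ} (hw : w.im ≠ 0) {t : ℝ} (ht : 0 < t) (ht1 : t ≤ 1) :
    ‖gB (a + 1) (t * w)‖ ≤ t ^ (-((a + 1) / 2)) * (‖w‖ / |w.im| * ‖gB a w‖) := by
  have h1 := enL_nonneg ha hw ht.le
  have h2 := enN_one_le (a := a) (w := w)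
  have h3 := enN_mono ha hw (mem_Ici.2 ht.le) (mem_Ici.2 zero_le_one) ht1
  have h4 := gB_succ_le ha hw
  set B := ‖w‖ / |w.im| * ‖gB a w‖ with hB
  have hB0 : 0 ≤ B := by positivity
  have h5 : enN a w t ≤ B ^ 2 := by
    refine h3.trans (h2.trans ?_)
    calc _ = B * ‖gB (a + 1) w‖ := by rw [hB]; ring
      _ ≤ B * B := by gcongr
      _ = _ := by ring
  unfold enL at h1
  rw [Complex.normSq_eq_norm_sq] at h1
  set P := ‖gB (a + 1) (t * w)‖
  have hP : 0 ≤ P := norm_nonneg _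
  set s := t ^ ((a + 1) / 2) with hs
  have hs0 : 0 < s := Real.rpow_pos_of_pos ht _
  have e : t ^ (a + 1) = s ^ 2 := by
    rw [hs, ← Real.rpow_natCast, ← Real.rpow_mul ht.le]; norm_num
  rw [e] at h1
  have h6 : (s * P) ^ 2 ≤ B ^ 2 := by nlinarith [mul_nonneg ha.le (sq_nonneg (s * P))]
  have h7 := abs_le_of_sq_le_sq h6 hB0
  rw [Real.rpow_neg ht.le, ← hs, inv_mul_eq_div, le_div_iff₀ hs0, mul_comm]
  exact (le_abs_self _).trans h7

lemma gB_pt {a : ℝ} (ha : 0 < a) {w : ℂ} (hw : w.im ≠ 0) {t : ℝ} (ht : 0 < t) (ht1 : t ≤ 1) :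
    t ^ (a / 2) * ‖gB a (t * w)‖ ≤ (1 + 2 * (‖w‖ ^ 2 / |w.im|)) * ‖gB a w‖ := by
  set B := ‖w‖ / |w.im| * ‖gB a w‖ with hB
  have hB0 : 0 ≤ B := by positivity
  set K := 2 * ‖w‖ * B * t ^ (-(a / 2)) with hK
  have hK0 : 0 ≤ K := by positivity
  have key : ‖gB a ((1:ℝ) * w) - gB a (t * w)‖ ≤ K * (√1 - √t) := by
    refine image_norm_le_of_norm_deriv_right_le_deriv_boundary'
      (f := fun s : ℝ => gB a (s * w) - gB a (t * w)) (f' := fun s => -w * gB (a + 1) (s * w))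
      (a := t) (b := 1) (B := fun s => K * (√s - √t)) (B' := fun s => K * (1 / (2 * √s)))
      ?_ ?_ ?_ ?_ ?_ ?_ (right_mem_Icc.2 ht1)
    · exact fun s _ => ((gB_line_deriv ha w s).sub_const _).continuousAt.continuousWithinAt
    · exact fun s _ => ((gB_line_deriv ha w s).sub_const _).hasDerivWithinAt
    · simp
    · fun_prop
    · intro s hs
      exact (((Real.hasDerivAt_sqrt (ht.trans_le hs.1).ne').sub_const _).const_mul K).hasDerivWithinAt
    · intro s hs
      have hs0 := ht.trans_le hs.1
      have h := gB_succ_pt ha hw hs0 hs.2.le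
      rw [norm_mul, norm_neg]
      have e1 : s ^ (-((a + 1) / 2)) = s ^ (-(a / 2)) * (1 / √s) := by
        rw [Real.sqrt_eq_rpow, one_div, ← Real.rpow_neg hs0.le, ← Real.rpow_add hs0]
        ring_nf
      have e2 : s ^ (-(a / 2)) ≤ t ^ (-(a / 2)) :=
        Real.rpow_le_rpow_of_nonpos ht hs.1 (by linarith)
      calc ‖w‖ * ‖gB (a + 1) (s * w)‖ ≤ ‖w‖ * (s ^ (-((a + 1) / 2)) * B) := by gcongr
        _ = ‖w‖ * (s ^ (-(a / 2)) * (1 / √s) * B) := by rw [e1]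
        _ ≤ ‖w‖ * (t ^ (-(a / 2)) * (1 / √s) * B) := by gcongr
        _ = _ := by
          have : √s ≠ 0 := (Real.sqrt_pos.2 hs0).ne'
          rw [hK]; field_simp
  have h1 : ‖gB a (t * w)‖ ≤ ‖gB a w‖ + K := by
    have h2 : K * (√1 - √t) ≤ K * 1 := by
      gcongr
      have := Real.sqrt_nonneg t
      rw [Real.sqrt_one]; linarith
    have h3 := norm_sub_norm_le (gB a (t * w)) (gB a ((1:ℝ) * w))
    rw [norm_sub_rev] at h3
    rw [Complex.ofReal_one, one_mul] at key h3
    linarith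
  have hp : 0 < t ^ (a / 2) := Real.rpow_pos_of_pos ht _
  have hp1 : t ^ (a / 2) ≤ 1 := Real.rpow_le_one ht.le ht1 (by positivity)
  calc t ^ (a / 2) * ‖gB a (t * w)‖ ≤ t ^ (a / 2) * (‖gB a w‖ + K) := by gcongr
    _ = t ^ (a / 2) * ‖gB a w‖ + 2 * ‖w‖ * B := by
      rw [hK, Real.rpow_neg ht.le]; field_simp
    _ ≤ 1 * ‖gB a w‖ + 2 * ‖w‖ * B := by gcongr
    _ = _ := by rw [hB]; ring

lemma gB_zero_ne {a : ℝ} (ha : 0 < a) : gB a 0 ≠ 0 := by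
  unfold gB
  rw [PS_zero]
  have : 0 < Real.Gamma (a + 1) := Real.Gamma_pos_of_pos (by linarith)
  simp [bA, this.ne']

lemma gB_ne_of_im {a : ℝ} (ha : 0 < a) {w : ℂ} (hw : w.im ≠ 0) : gB a w ≠ 0 := by
  intro h0
  have h1 : ∀ t ∈ Ioo (0:ℝ) 1, gB a (t * w) = 0 := by
    intro t ht
    have := gB_pt ha hw ht.1 ht.2.le
    rw [h0, norm_zero, mul_zero] at this
    have hp : 0 < t ^ (a / 2) := Real.rpow_pos_of_pos ht.1 _
    have h2 : ‖gB a (t * w)‖ ≤ 0 := by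
      by_contra! hc
      exact absurd this (not_le.2 (mul_pos hp hc))
    exact norm_le_zero_iff.1 h2
  have hc : Continuous (fun t : ℝ => gB a (t * w)) := by
    have := gB_cont ha
    fun_prop
  have h2 : Filter.Tendsto (fun t : ℝ => gB a (t * w)) (nhdsWithin 0 (Ioi 0)) (nhds (gB a 0)) := by
    have := (hc.tendsto 0).mono_left (nhdsWithin_le_nhds (s := Ioi 0))
    simpa using this
  have h3 : Filter.Tendsto (fun t : ℝ => gB a (t * w)) (nhdsWithin 0 (Ioi 0)) (nhds 0) := by
    refine tendsto_const_nhds.congr' ?_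
    filter_upwards [Ioo_mem_nhdsGT (zero_lt_one' ℝ)] with t ht
    exact (h1 t ht).symm
  exact gB_zero_ne ha (tendsto_nhds_unique h2 h3)

lemma gB_neg_ne {a : ℝ} (ha : 0 < a) {t : ℝ} (ht : 0 ≤ t) : gB a (-t : ℝ) ≠ 0 := by
  have h := (facBdd_bA ha).hasSum ((-t : ℝ) : ℂ)
  have h2 := Complex.hasSum_re h
  have e : ∀ k, ((bA a k : ℂ) * ((-t : ℝ) : ℂ) ^ k).re
      = t ^ k / (k.factorial * Real.Gamma (a + k + 1)) := by
    intro k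
    rw [← Complex.ofReal_pow, ← Complex.ofReal_mul, Complex.ofReal_re, bA]
    rw [div_mul_eq_mul_div, ← mul_pow]; norm_num
  simp only [e] at h2
  have h3 := le_hasSum h2 0 (fun k _ => by
    have : 0 < Real.Gamma (a + k + 1) := Real.Gamma_pos_of_pos (by positivity)
    positivity)
  intro h0
  change PS _ _ = 0 at h0
  rw [h0] at h3
  have : 0 < Real.Gamma (a + 1) := Real.Gamma_pos_of_pos (by linarith)
  simp at h3
  linarith

lemma gB_simple {a : ℝ} (ha : 0 < a) {w : ℂ} (h0 : gB a w = 0) : gB (a + 1) w ≠ 0 := by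
  intro h1
  have hw : w ≠ 0 := by rintro rfl; exact gB_zero_ne ha h0
  have h2 : ∀ n : ℕ, gB (a + n) w = 0 ∧ gB (a + n + 1) w = 0 := by
    intro n
    induction n with
    | zero => simpa using ⟨h0, h1⟩
    | succ n ih =>
      have := gB_ode (a := a + n) (by positivity) w
      rw [ih.1, ih.2, mul_zero, add_zero, mul_neg, neg_eq_zero, mul_eq_zero] at this
      push_cast
      refine ⟨by rw [← add_assoc]; exact ih.2, ?_⟩
      rw [show a + (n + 1) + 1 = a + n + 2 by ring]
      exact this.resolve_left hw
  have h3 : ∀ n : ℕ, iteratedDeriv n (gB a) = fun z => (-1) ^ n * gB (a + n) z := by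
    intro n
    induction n with
    | zero => simp
    | succ n ih =>
      rw [iteratedDeriv_succ, ih]
      funext z
      have := (gB_deriv (a := a + n) (by positivity) z).const_mul ((-1) ^ n)
      rw [this.deriv, pow_succ]; push_cast; rw [← add_assoc]; ring
  have h4 := Complex.taylorSeries_eq_of_entire' w 0 (facBdd_bA ha).differentiable
  refine gB_zero_ne ha ?_
  change _ = gB a 0 at h4
  rw [← h4]
  convert tsum_zero with n
  change _ * iteratedDeriv n (gB a) w * _ = _
  rw [h3 n]
  simp [(h2 n).1]

lemma entire_quot {f g : ℂ → ℂ} (hf : Differentiable ℂ f) (hg : Differentiable ℂ g)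
    (h0 : ∀ z, g z = 0 → f z = 0) (h1 : ∀ z, g z = 0 → deriv g z ≠ 0) :
    ∃ G : ℂ → ℂ, Differentiable ℂ G ∧ ∀ z, f z = G z * g z := by
  classical
  refine ⟨fun z => if g z = 0 then deriv f z / deriv g z else f z / g z, fun z => ?_, fun z => ?_⟩
  · by_cases hz : g z = 0
    · have df : DifferentiableAt ℂ (dslope f z) z :=
        ((Complex.differentiableOn_dslope Filter.univ_mem).2 hf.differentiableOn).differentiableAt
          Filter.univ_mem
      have dg : DifferentiableAt ℂ (dslope g z) z :=
        ((Complex.differentiableOn_dslope Filter.univ_mem).2 hg.differentiableOn).differentiableAt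
          Filter.univ_mem
      have hgz : dslope g z z ≠ 0 := by rw [dslope_same]; exact h1 z hz
      refine (df.div dg hgz).congr_of_eventuallyEq ?_
      filter_upwards [dg.continuousAt.eventually_ne hgz] with u hu
      by_cases huz : u = z
      · subst huz
        simp [hz, dslope_same]
      · have e1 : dslope g z u = g u / (u - z) := by
          rw [dslope_of_ne _ huz, slope_def_field, hz, sub_zero]
        have e2 : dslope f z u = f u / (u - z) := by
          rw [dslope_of_ne _ huz, slope_def_field, h0 z hz, sub_zero]
        have hsub : u - z ≠ 0 := sub_ne_zero.2 huz
        have hgu : g u ≠ 0 := by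
          intro h; rw [e1, h, zero_div] at hu; exact hu rfl
        simp only [hgu, if_false, Pi.div_apply, e1, e2]
        field_simp
    · refine ((hf z).div (hg z) hz).congr_of_eventuallyEq ?_
      filter_upwards [(hg z).continuousAt.eventually_ne hz] with u hu
      simp [hu]
  · by_cases hz : g z = 0
    · simp [hz, h0 z hz]
    · simp [hz]

lemma affine_of_bound {G : ℂ → ℂ} (hG : Differentiable ℂ G) {C : ℝ} (hC : 0 ≤ C)
    (hb : ∀ w : ℂ, w.im ≠ 0 → ‖G w‖ ≤ C * (1 + 2 * (‖w‖ ^ 2 / |w.im|))) :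
    ∃ c0 c1 : ℂ, ∀ w, G w = c0 + c1 * w := by
  have hR : ∀ R : ℝ, 1 ≤ R → ∀ w : ℂ, ‖w‖ ≤ R / 2 → ‖G w‖ ≤ 8 * C * R := by
    intro R hR1 w hw
    have hR0 : 0 < R := by linarith
    have hH : ∀ z ∈ frontier (Metric.ball (0:ℂ) R), ‖(z ^ 2 - (R:ℂ) ^ 2) * G z‖ ≤ 6 * C * R ^ 3 := by
      intro z hz
      rw [frontier_ball _ hR0.ne', mem_sphere_zero_iff_norm] at hz
      have e : z ^ 2 - (R:ℂ) ^ 2 = z * (2 * z.im * Complex.I) := by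
        have h1 : (R:ℂ) ^ 2 = z * (starRingEnd ℂ) z := by
          rw [Complex.mul_conj, Complex.normSq_eq_norm_sq, hz]; push_cast; rfl
        rw [h1, sq, ← mul_sub, Complex.sub_conj]; push_cast; ring
      have hn : ‖z ^ 2 - (R:ℂ) ^ 2‖ = R * (2 * |z.im|) := by
        rw [e, norm_mul, norm_mul, norm_mul, hz, Complex.norm_I, Complex.norm_real]; simp
      rw [norm_mul, hn]
      by_cases him : z.im = 0
      · rw [him]; simp; positivity
      · have := hb z him
        rw [hz] at this
        have hp : 0 < |z.im| := abs_pos.2 him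
        have hle : |z.im| ≤ R := hz ▸ Complex.abs_im_le_norm z
        calc R * (2 * |z.im|) * ‖G z‖ ≤ R * (2 * |z.im|) * (C * (1 + 2 * (R ^ 2 / |z.im|))) := by gcongr
          _ = 2 * C * R * (|z.im| + 2 * R ^ 2) := by field_simp
          _ ≤ 2 * C * R * (R * R + 2 * R ^ 2) := by gcongr; nlinarith
          _ = _ := by ring
    have hd : Differentiable ℂ (fun z : ℂ => (z ^ 2 - (R:ℂ) ^ 2) * G z) := by fun_prop
    have h1 := Complex.norm_le_of_forall_mem_frontier_norm_le Metric.isBounded_ball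
      hd.diffContOnCl hH (z := w) (by
        rw [closure_ball _ hR0.ne', mem_closedBall_zero_iff]; linarith)
    rw [norm_mul] at h1
    have h2 : 3 / 4 * R ^ 2 ≤ ‖w ^ 2 - (R:ℂ) ^ 2‖ := by
      have := norm_sub_norm_le ((R:ℂ) ^ 2) (w ^ 2)
      rw [norm_sub_rev, norm_pow, norm_pow, Complex.norm_real, Real.norm_of_nonneg hR0.le] at this
      nlinarith [norm_nonneg w]
    have h3 : 3 / 4 * R ^ 2 * ‖G w‖ ≤ 6 * C * R ^ 3 :=
      (mul_le_mul_of_nonneg_right h2 (norm_nonneg _)).trans h1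
    have h4 : (3 / 4 * R ^ 2) * ‖G w‖ ≤ (3 / 4 * R ^ 2) * (8 * C * R) := by
      refine h3.trans (le_of_eq ?_); ring
    exact le_of_mul_le_mul_left h4 (by positivity)
  set D := dslope G 0 with hD
  have hDd : Differentiable ℂ D := by
    rw [← differentiableOn_univ]
    exact (Complex.differentiableOn_dslope Filter.univ_mem).2 hG.differentiableOn
  have hGD : ∀ w, G w = G 0 + D w * w := by
    intro w
    have := sub_smul_dslope G 0 w
    rw [smul_eq_mul, sub_zero] at this
    rw [hD, mul_comm, this]; ring
  have hbd : Bornology.IsBounded (range D) := by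
    obtain ⟨K, hK⟩ := (isCompact_closedBall (0:ℂ) 1).exists_bound_of_continuousOn
      hDd.continuous.continuousOn
    rw [isBounded_iff_forall_norm_le]
    refine ⟨max K (16 * C + ‖G 0‖), ?_⟩
    rintro _ ⟨w, rfl⟩
    by_cases hw : ‖w‖ ≤ 1
    · exact (hK w (by simpa using hw)).trans (le_max_left _ _)
    · push Not at hw
      refine le_trans ?_ (le_max_right _ _)
      have h1 := hR (2 * ‖w‖) (by linarith) w (by linarith)
      have h2 : ‖D w‖ * ‖w‖ ≤ ‖G w‖ + ‖G 0‖ := by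
        rw [← norm_mul, show D w * w = G w - G 0 by rw [hGD w]; ring]
        exact norm_sub_le _ _
      have h3 : ‖D w‖ * ‖w‖ ≤ (16 * C + ‖G 0‖) * ‖w‖ := by
        nlinarith [norm_nonneg (G 0)]
      exact le_of_mul_le_mul_right h3 (by linarith)
  refine ⟨G 0, D 0, fun w => ?_⟩
  rw [hGD w, hDd.apply_eq_apply_of_bounded hbd w 0]

lemma swapPS {c : ℕ → ℂ} (hc : FacBdd c) {W ρ : ℝ → ℂ}
    (hW : IntegrableOn W (Ioo (0:ℝ) 1)) (hρ : Continuous ρ)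
    (hρ1 : ∀ r ∈ Ioo (0:ℝ) 1, ‖ρ r‖ ≤ 1) (w : ℂ) :
    HasSum (fun k => c k * w ^ k * ∫ r in Ioo (0:ℝ) 1, W r * ρ r ^ k)
      (∫ r in Ioo (0:ℝ) 1, W r * PS c (ρ r * w)) := by
  have hint : ∀ k, IntegrableOn (fun r => W r * ρ r ^ k) (Ioo (0:ℝ) 1) := by
    intro k
    refine Integrable.mul_bdd (c := 1) hW (hρ.pow k).aestronglyMeasurable ?_
    refine (ae_restrict_iff' measurableSet_Ioo).2 (Filter.Eventually.of_forall fun r hr => ?_)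
    rw [norm_pow]; exact pow_le_one₀ (norm_nonneg _) (hρ1 r hr)
  have h := hasSum_integral_of_summable_integral_norm (μ := volume.restrict (Ioo (0:ℝ) 1))
    (F := fun k r => c k * w ^ k * (W r * ρ r ^ k)) (fun k => (hint k).const_mul _) ?_
  · simp only [integral_const_mul] at h
    suffices e : (∫ r in Ioo (0:ℝ) 1, W r * PS c (ρ r * w))
        = ∫ r in Ioo (0:ℝ) 1, ∑' k, c k * w ^ k * (W r * ρ r ^ k) by
      rw [e]; exact h
    refine integral_congr_ae (Filter.Eventually.of_forall fun r => ?_)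
    simp only [PS]
    rw [← tsum_mul_left]
    refine tsum_congr fun k => ?_
    rw [mul_pow]; ring
  · refine Summable.of_nonneg_of_le (fun k => integral_nonneg fun _ => norm_nonneg _) (fun k => ?_)
      ((hc.norm_summable w).mul_right (∫ r in Ioo (0:ℝ) 1, ‖W r‖))
    simp only [norm_mul (c k * w ^ k), integral_const_mul]
    refine mul_le_mul_of_nonneg_left ?_ (norm_nonneg _)
    refine setIntegral_mono_on (hint k).norm hW.norm measurableSet_Ioo fun r hr => ?_
    rw [norm_mul, norm_pow]
    exact mul_le_of_le_one_right (norm_nonneg _) (pow_le_one₀ (norm_nonneg _) (hρ1 _ hr))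

lemma beta_aux {s t : ℝ} (hs : 0 < s) (ht : 0 < t) :
    IntegrableOn (fun r : ℝ => r ^ (s - 1) * (1 - r) ^ (t - 1)) (Ioo 0 1) ∧
    ∫ r in Ioo (0:ℝ) 1, r ^ (s - 1) * (1 - r) ^ (t - 1)
      = Real.Gamma s * Real.Gamma t / Real.Gamma (s + t) := by
  have e : ∀ r ∈ Ioo (0:ℝ) 1, (r:ℂ) ^ ((s:ℂ) - 1) * (1 - (r:ℂ)) ^ ((t:ℂ) - 1)
      = ((r ^ (s - 1) * (1 - r) ^ (t - 1) : ℝ) : ℂ) := by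
    intro r hr
    rw [Complex.ofReal_mul, Complex.ofReal_cpow hr.1.le, Complex.ofReal_cpow (by linarith [hr.2])]
    push_cast; rfl
  have h1 := Complex.betaIntegral_convergent (u := s) (v := t) (by simpa) (by simpa)
  rw [intervalIntegrable_iff_integrableOn_Ioo_of_le zero_le_one] at h1
  have h2 := h1.congr_fun e measurableSet_Ioo
  have h3 : IntegrableOn (fun r : ℝ => r ^ (s - 1) * (1 - r) ^ (t - 1)) (Ioo 0 1) := by
    have := h2.re
    unfold IntegrableOn
    simpa using this
  refine ⟨h3, ?_⟩
  have h4 := Complex.betaIntegral_eq_Gamma_mul_div s t (by simpa) (by simpa)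
  unfold Complex.betaIntegral at h4
  rw [intervalIntegral.integral_of_le zero_le_one, integral_Ioc_eq_integral_Ioo,
    setIntegral_congr_fun measurableSet_Ioo e, integral_complex_ofReal, ← Complex.ofReal_add,
    Complex.Gamma_ofReal, Complex.Gamma_ofReal, Complex.Gamma_ofReal] at h4
  exact_mod_cast h4

lemma sonine {a b : ℝ} (ha : 0 < a) (hab : a < b) (X : ℂ) :
    Real.Gamma (b - a) * gB b X
      = ∫ r in Ioo (0:ℝ) 1, ((r ^ a * (1 - r) ^ (b - a - 1) : ℝ) : ℂ) * gB a (r * X) := by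
  have hba : 0 < b - a := sub_pos.2 hab
  have hW := (beta_aux (s := a + 1) (t := b - a) (by linarith) hba).1
  rw [add_sub_cancel_right] at hW
  have h := swapPS (facBdd_bA ha) (W := fun r => ((r ^ a * (1 - r) ^ (b - a - 1) : ℝ) : ℂ))
    (ρ := fun r => (r : ℂ)) hW.ofReal Complex.continuous_ofReal (by
      intro r hr
      rw [Complex.norm_real, Real.norm_of_nonneg hr.1.le]; exact hr.2.le) X
  refine HasSum.unique ?_ h
  refine (((facBdd_bA (ha.trans hab)).hasSum X).mul_left _).congr_fun (fun k => ?_)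
  have hk := (beta_aux (s := a + k + 1) (t := b - a) (by positivity) hba).2
  have e : ∫ r in Ioo (0:ℝ) 1, ((r ^ a * (1 - r) ^ (b - a - 1) : ℝ) : ℂ) * (r:ℂ) ^ k
      = ((Real.Gamma (a + k + 1) * Real.Gamma (b - a) / Real.Gamma (b + k + 1) : ℝ) : ℂ) := by
    rw [show b + k + 1 = a + k + 1 + (b - a) by ring, ← hk, ← integral_complex_ofReal]
    refine setIntegral_congr_fun measurableSet_Ioo fun r hr => ?_
    have : r ^ (a + k + 1 - 1) = r ^ a * r ^ k := by
      rw [add_sub_cancel_right, Real.rpow_add hr.1, Real.rpow_natCast]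
    simp only [this]
    push_cast; ring
  rw [e]
  have h1 : 0 < Real.Gamma (a + k + 1) := Real.Gamma_pos_of_pos (by positivity)
  have h2 : 0 < b := ha.trans hab
  have h3 : 0 < Real.Gamma (b + k + 1) := Real.Gamma_pos_of_pos (by positivity)
  have key : bA a k * (Real.Gamma (a + k + 1) * Real.Gamma (b - a) / Real.Gamma (b + k + 1))
      = Real.Gamma (b - a) * bA b k := by
    unfold bA; field_simp
  have key2 := congrArg (fun x : ℝ => (x : ℂ)) key
  simp only [Complex.ofReal_mul] at key2 ⊢
  rw [← mul_assoc, ← key2]; ring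

lemma gB_big_bound {a b : ℝ} (ha : 0 < a) (hab : a < b) :
    ∃ C : ℝ, 0 ≤ C ∧ ∀ w : ℂ, w.im ≠ 0 → ∀ x ∈ Ioo (0:ℝ) 1,
      x ^ b * ‖gB b (x ^ 2 * w)‖ ≤ C * ((1 + 2 * (‖w‖ ^ 2 / |w.im|)) * ‖gB a w‖) := by
  have hba : 0 < b - a := sub_pos.2 hab
  have hG : 0 < Real.Gamma (b - a) := Real.Gamma_pos_of_pos hba
  have hI := (beta_aux (s := a / 2 + 1) (t := b - a) (by linarith) hba).1
  rw [add_sub_cancel_right] at hI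
  set CB := ∫ r in Ioo (0:ℝ) 1, r ^ (a / 2) * (1 - r) ^ (b - a - 1) with hCB
  have hCB0 : 0 ≤ CB := setIntegral_nonneg measurableSet_Ioo fun r hr =>
    mul_nonneg (Real.rpow_nonneg hr.1.le _) (Real.rpow_nonneg (by linarith [hr.2]) _)
  refine ⟨CB / Real.Gamma (b - a), by positivity, fun w hw x hx => ?_⟩
  set S := (1 + 2 * (‖w‖ ^ 2 / |w.im|)) * ‖gB a w‖ with hS
  have hS0 : 0 ≤ S := by positivity
  have h1 : ‖∫ r in Ioo (0:ℝ) 1, ((r ^ a * (1 - r) ^ (b - a - 1) : ℝ) : ℂ) * gB a (r * (x ^ 2 * w))‖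
      ≤ ∫ r in Ioo (0:ℝ) 1, x ^ (-a) * S * (r ^ (a / 2) * (1 - r) ^ (b - a - 1)) := by
    refine norm_integral_le_of_norm_le (hI.const_mul _) ?_
    refine (ae_restrict_iff' measurableSet_Ioo).2 (Filter.Eventually.of_forall fun r hr => ?_)
    have h0 : 0 ≤ (1 - r) ^ (b - a - 1) := Real.rpow_nonneg (by linarith [hr.2]) _
    have hr0 : 0 < r ^ (a / 2) := Real.rpow_pos_of_pos hr.1 _
    rw [norm_mul, Complex.norm_real, Real.norm_of_nonneg
      (mul_nonneg (Real.rpow_nonneg hr.1.le _) h0)]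
    have ht : 0 < r * x ^ 2 := mul_pos hr.1 (pow_pos hx.1 2)
    have ht1 : r * x ^ 2 ≤ 1 := mul_le_one₀ hr.2.le (by positivity) (pow_le_one₀ hx.1.le hx.2.le)
    have hpt := gB_pt ha hw ht ht1
    rw [← hS] at hpt
    have e1 : (r * x ^ 2) ^ (a / 2) = r ^ (a / 2) * x ^ a := by
      rw [Real.mul_rpow hr.1.le (by positivity), ← Real.rpow_natCast, ← Real.rpow_mul hx.1.le]
      congr 2; push_cast; ring
    have e2 : ((r * x ^ 2 : ℝ) : ℂ) * w = r * (x ^ 2 * w) := by push_cast; ring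
    have e3 : r ^ a = r ^ (a / 2) * r ^ (a / 2) := by
      rw [← Real.rpow_add hr.1]; congr 1; ring
    have hxa : 0 < x ^ a := Real.rpow_pos_of_pos hx.1 _
    rw [e1, e2] at hpt
    rw [e3, Real.rpow_neg hx.1.le]
    have h5 : r ^ (a / 2) * ‖gB a (r * (x ^ 2 * w))‖ ≤ (x ^ a)⁻¹ * S := by
      rw [inv_mul_eq_div, le_div_iff₀ hxa]
      refine le_trans (le_of_eq ?_) hpt; ring
    calc r ^ (a / 2) * r ^ (a / 2) * (1 - r) ^ (b - a - 1) * ‖gB a (r * (x ^ 2 * w))‖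
        = (r ^ (a / 2) * ‖gB a (r * (x ^ 2 * w))‖) * (r ^ (a / 2) * (1 - r) ^ (b - a - 1)) := by ring
      _ ≤ _ := by gcongr
  rw [← sonine ha hab, integral_const_mul, norm_mul, Complex.norm_real,
    Real.norm_of_nonneg hG.le, ← hCB] at h1
  have hxb : x ^ b * x ^ (-a) ≤ 1 := by
    rw [← Real.rpow_add hx.1]
    exact Real.rpow_le_one hx.1.le hx.2.le (by linarith)
  have hxb0 : 0 ≤ x ^ b := Real.rpow_nonneg hx.1.le _
  rw [div_mul_eq_mul_div, le_div_iff₀ hG]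
  calc x ^ b * ‖gB b (x ^ 2 * w)‖ * Real.Gamma (b - a)
      = x ^ b * (Real.Gamma (b - a) * ‖gB b (x ^ 2 * w)‖) := by ring
    _ ≤ x ^ b * (x ^ (-a) * S * CB) := by gcongr
    _ = (x ^ b * x ^ (-a)) * (CB * S) := by ring
    _ ≤ 1 * (CB * S) := by gcongr
    _ = _ := by ring

lemma besselJ_aux {a x : ℝ} (hx : 0 < x) :
    ((∑' n : ℕ, (-1 : ℝ) ^ n / (n.factorial * Real.Gamma (a + n + 1)) *
      (x / 2) ^ (a + 2 * (n : ℝ)) : ℝ) : ℂ)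
      = (((x / 2) ^ a : ℝ) : ℂ) * gB a (((x / 2) ^ 2 : ℝ) : ℂ) := by
  rw [Complex.ofReal_tsum, gB, PS, ← tsum_mul_left]
  refine tsum_congr fun k => ?_
  have h2 : 0 < x / 2 := by positivity
  have : (x / 2) ^ (a + 2 * (k:ℝ)) = (x / 2) ^ a * ((x / 2) ^ 2) ^ k := by
    rw [Real.rpow_add h2, Real.rpow_mul h2.le, Real.rpow_natCast]; norm_num
  rw [this, bA]
  push_cast; ring

lemma moments_zero {y : ℝ → ℝ} {b : ℝ} (hb : 0 < b) (hy : IntegrableOn y (Ioo (0 : ℝ) 1))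
    (hm : ∀ k : ℕ, ∫ x in Ioo (0:ℝ) 1, y x * x ^ b * (x ^ 2) ^ k = 0) :
    ∀ᵐ x ∂(volume.restrict (Ioo (0 : ℝ) 1)), y x = 0 := by
  have hcb : Continuous (fun x : ℝ => x ^ b) := Real.continuous_rpow_const hb.le
  have hz : IntegrableOn (fun x => y x * x ^ b) (Ioo (0:ℝ) 1) := by
    refine Integrable.mul_bdd (c := 1) hy hcb.aestronglyMeasurable ?_
    refine (ae_restrict_iff' measurableSet_Ioo).2 (Filter.Eventually.of_forall fun r hr => ?_)
    rw [Real.norm_of_nonneg (Real.rpow_nonneg hr.1.le _)]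
    exact Real.rpow_le_one hr.1.le hr.2.le hb.le
  set z := fun x => y x * x ^ b with hzdef
  have hmul : ∀ φ : ℝ → ℝ, Continuous φ → IntegrableOn (fun x => z x * φ x) (Ioo (0:ℝ) 1) := by
    intro φ hφ
    obtain ⟨K, hK⟩ := (isCompact_Icc (a := (0:ℝ)) (b := 1)).exists_bound_of_continuousOn
      hφ.continuousOn
    refine Integrable.mul_bdd (c := K) hz hφ.aestronglyMeasurable ?_
    refine (ae_restrict_iff' measurableSet_Ioo).2 (Filter.Eventually.of_forall fun r hr => ?_)
    exact hK r (Ioo_subset_Icc_self hr)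
  have hpoly : ∀ p : Polynomial ℝ, ∫ x in Ioo (0:ℝ) 1, z x * p.eval (x ^ 2) = 0 := by
    intro p
    induction p using Polynomial.induction_on' with
    | add p q hp hq =>
      have hp' := hmul (fun x => p.eval (x ^ 2)) (by fun_prop)
      have hq' := hmul (fun x => q.eval (x ^ 2)) (by fun_prop)
      simp only [Polynomial.eval_add, mul_add]
      rw [integral_add hp' hq', hp, hq, add_zero]
    | monomial n c =>
      simp only [Polynomial.eval_monomial]
      have := hm n
      rw [show (fun x => z x * (c * (x ^ 2) ^ n)) = fun x => c * (y x * x ^ b * (x ^ 2) ^ n) by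
        funext x; simp only [hzdef]; ring, integral_const_mul, this, mul_zero]
  have hcont : ∀ φ : ℝ → ℝ, Continuous φ → ∫ x in Ioo (0:ℝ) 1, z x * φ x = 0 := by
    intro φ hφ
    set I := ∫ x in Ioo (0:ℝ) 1, ‖z x‖ with hI
    have hI0 : 0 ≤ I := integral_nonneg fun _ => norm_nonneg _
    have hle : ∀ ε > 0, ‖∫ x in Ioo (0:ℝ) 1, z x * φ x‖ ≤ ε * I := by
      intro ε hε
      obtain ⟨p, hp⟩ := exists_polynomial_near_of_continuousOn 0 1 (fun t => φ (√t))
        (by fun_prop) ε hε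
      have e : ∫ x in Ioo (0:ℝ) 1, z x * φ x
          = ∫ x in Ioo (0:ℝ) 1, z x * (φ x - p.eval (x ^ 2)) := by
        simp only [mul_sub]
        rw [integral_sub (hmul φ hφ) (hmul (fun x => p.eval (x ^ 2)) (by fun_prop)), hpoly, sub_zero]
      rw [e, hI, ← integral_const_mul]
      refine norm_integral_le_of_norm_le (hz.norm.const_mul _) ?_
      refine (ae_restrict_iff' measurableSet_Ioo).2 (Filter.Eventually.of_forall fun r hr => ?_)
      have h1 := hp (r ^ 2) ⟨by positivity, pow_le_one₀ hr.1.le hr.2.le⟩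
      simp only [Real.sqrt_sq hr.1.le] at h1
      rw [norm_mul, mul_comm]
      gcongr
      rw [← norm_neg, neg_sub]; exact h1.le
    by_contra hne
    have hpos := norm_pos_iff.2 hne
    have h2 := hle (‖∫ x in Ioo (0:ℝ) 1, z x * φ x‖ / (2 * (I + 1))) (by positivity)
    rw [div_mul_eq_mul_div, le_div_iff₀ (by positivity)] at h2
    nlinarith
  have h3 := (isOpen_Ioo (a := (0:ℝ)) (b := 1)).ae_eq_zero_of_integral_contDiff_smul_eq_zero
    (μ := volume) (f := z) hz.locallyIntegrableOn (by
      intro φ hφ _ hs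
      rw [← hcont φ hφ.continuous]
      rw [← setIntegral_eq_integral_of_forall_compl_eq_zero (s := Ioo (0:ℝ) 1)]
      · refine integral_congr_ae (Filter.Eventually.of_forall fun x => ?_)
        simp [mul_comm]
      · intro x hx
        have : φ x = 0 := image_eq_zero_of_notMem_tsupport (fun h => hx (hs h))
        simp [this])
  rw [ae_restrict_iff' measurableSet_Ioo]
  filter_upwards [h3] with x hx hx1
  rcases mul_eq_zero.1 (hx hx1) with h | h
  · exact h
  · exact absurd h (Real.rpow_pos_of_pos hx1.1 _).ne'
lemma besselJ_eq {a x : ℝ} (hx : 0 < x) :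
    ((besselJ a x : ℝ) : ℂ) = (((x / 2) ^ a : ℝ) : ℂ) * gB a (((x / 2) ^ 2 : ℝ) : ℂ) :=
  besselJ_aux hx

lemma Gamma_ge_fact {a : ℝ} (ha : 0 < a) (k : ℕ) :
    Real.Gamma (a + 1) * k.factorial ≤ Real.Gamma (a + k + 1) := by
  induction k with
  | zero => simp
  | succ k ih =>
    have : a + (k + 1 : ℕ) + 1 = (a + k + 1) + 1 := by push_cast; ring
    rw [this, Real.Gamma_add_one (s := a + k + 1) (by positivity), Nat.factorial_succ]
    have h1 : 0 < Real.Gamma (a + k + 1) := Real.Gamma_pos_of_pos (by positivity)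
    push_cast
    calc Real.Gamma (a + 1) * ((k + 1) * k.factorial)
        = (k + 1) * (Real.Gamma (a + 1) * k.factorial) := by ring
      _ ≤ (k + 1) * Real.Gamma (a + k + 1) := by gcongr
      _ ≤ (a + k + 1) * Real.Gamma (a + k + 1) := by gcongr; linarith

/-- shifted coefficients -/
noncomputable def shC (a : ℝ) : ℕ → ℂ
  | 0 => 0
  | k + 1 => (bA a k : ℂ)

lemma facBdd_shC {a : ℝ} (ha : 0 < a) : FacBdd (shC a) := by
  have h0 : 0 < Real.Gamma (a + 1) := Real.Gamma_pos_of_pos (by positivity)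
  refine ⟨2 / Real.Gamma (a + 1), fun k => ?_⟩
  cases k with
  | zero => simp [shC]; positivity
  | succ k =>
    have h1 := Gamma_ge_fact ha k
    have h2 : (0:ℝ) < k.factorial := by positivity
    have h3 : 0 < Real.Gamma (a + k + 1) := Real.Gamma_pos_of_pos (by positivity)
    have h4 : ((k:ℝ) + 1) ≤ 2 * k.factorial := by
      have := Nat.self_le_factorial k
      have h5 := Nat.factorial_pos k
      exact_mod_cast (by omega : k + 1 ≤ 2 * k.factorial)
    simp only [shC]
    rw [Complex.norm_real, Real.norm_eq_abs, bA, abs_div, abs_pow, abs_neg, abs_one, one_pow,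
      abs_of_pos (mul_pos h2 h3), div_div, div_le_div_iff₀ (by positivity) (by positivity),
      Nat.factorial_succ]
    push_cast
    calc 1 * (Real.Gamma (a + 1) * ((k + 1) * k.factorial))
        = (k + 1) * (Real.Gamma (a + 1) * k.factorial) := by ring
      _ ≤ (2 * k.factorial) * Real.Gamma (a + k + 1) := by gcongr
      _ = _ := by ring

lemma PS_shC {a : ℝ} (ha : 0 < a) (w : ℂ) : PS (shC a) w = w * gB a w := by
  unfold gB PS
  rw [((facBdd_shC ha).norm_summable w).of_norm.tsum_eq_zero_add]
  simp only [shC, zero_mul, zero_add]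
  rw [← tsum_mul_left]
  exact tsum_congr fun k => by ring

lemma bA_prev {a : ℝ} (ha : 0 < a) (k : ℕ) :
    bA a k = -((k + 1) * (a + k + 1)) * bA a (k + 1) := by
  have h1 := bA_deriv (a := a) k
  have h2 := bA_step ha k
  rw [← h2]
  linear_combination (a + k + 1) * h1

lemma bA_ne {a : ℝ} (ha : 0 < a) (k : ℕ) : bA a k ≠ 0 := by
  have h3 : 0 < Real.Gamma (a + k + 1) := Real.Gamma_pos_of_pos (by positivity)
  unfold bA
  exact div_ne_zero (pow_ne_zero _ (by norm_num)) (by positivity)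

lemma bA_ratio {a b : ℝ} (ha : 0 < a) (hab : a < b) (k : ℕ) :
    |bA b k / bA a k| ≤ |bA b 0 / bA a 0| := by
  have hb := ha.trans hab
  induction k with
  | zero => exact le_rfl
  | succ k ih =>
    refine le_trans ?_ ih
    have h1 := bA_prev ha k
    have h2 := bA_prev hb k
    have h3 := bA_ne ha (k + 1)
    have e : bA b k / bA a k = (b + k + 1) / (a + k + 1) * (bA b (k + 1) / bA a (k + 1)) := by
      rw [h1, h2]
      have : a + k + 1 ≠ 0 := by positivity
      have : (k:ℝ) + 1 ≠ 0 := by positivity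
      field_simp
    rw [e, abs_mul]
    refine le_mul_of_one_le_left (abs_nonneg _) ?_
    rw [abs_of_nonneg (by positivity), le_div_iff₀ (by positivity)]
    linarith

/-- For `0 < α < ν`, the sequence `{J_ν(x j_{n,α})}` is complete in `L¹(0,1)`. -/
theorem stmt12 (α ν : ℝ) (hα : 0 < α) (hαν : α < ν)
    (j : ℕ → ℝ) (hj_mono : StrictMono j) (hj_pos : ∀ n, 0 < j n)
    (hj_zero : ∀ n, besselJ α (j n) = 0)
    (hj_all : ∀ x : ℝ, 0 < x → besselJ α x = 0 → ∃ n, j n = x)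
    (y : ℝ → ℝ) (hy : IntegrableOn y (Set.Ioo (0 : ℝ) 1))
    (hvanish : ∀ n, ∫ x in Set.Ioo (0 : ℝ) 1, y x * besselJ ν (x * j n) = 0) :
    ∀ᵐ x ∂(volume.restrict (Set.Ioo (0 : ℝ) 1)), y x = 0 := by
  have hν : 0 < ν := hα.trans hαν
  have hcb : Continuous (fun x : ℝ => x ^ ν) := Real.continuous_rpow_const hν.le
  have hz : IntegrableOn (fun x => y x * x ^ ν) (Ioo (0:ℝ) 1) := by
    refine Integrable.mul_bdd (c := 1) hy hcb.aestronglyMeasurable ?_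
    refine (ae_restrict_iff' measurableSet_Ioo).2 (Filter.Eventually.of_forall fun r hr => ?_)
    rw [Real.norm_of_nonneg (Real.rpow_nonneg hr.1.le _)]
    exact Real.rpow_le_one hr.1.le hr.2.le hν.le
  set m : ℕ → ℝ := fun k => ∫ x in Ioo (0:ℝ) 1, y x * x ^ ν * (x ^ 2) ^ k with hm
  set Y := ∫ x in Ioo (0:ℝ) 1, ‖y x‖ with hY
  have hY0 : 0 ≤ Y := integral_nonneg fun _ => norm_nonneg _
  have hdom : ∀ k : ℕ, ∀ᵐ x ∂(volume.restrict (Ioo (0 : ℝ) 1)),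
      ‖y x * x ^ ν * (x ^ 2) ^ k‖ ≤ ‖y x‖ := by
    intro k
    refine (ae_restrict_iff' measurableSet_Ioo).2 (Filter.Eventually.of_forall fun r hr => ?_)
    rw [mul_assoc, norm_mul]
    refine mul_le_of_le_one_right (norm_nonneg _) ?_
    have h1 : 0 ≤ r ^ ν := Real.rpow_nonneg hr.1.le _
    rw [Real.norm_of_nonneg (by positivity)]
    exact mul_le_one₀ (Real.rpow_le_one hr.1.le hr.2.le hν.le) (by positivity)
      (pow_le_one₀ (by positivity) (pow_le_one₀ hr.1.le hr.2.le))
  have hm_bd : ∀ k, |m k| ≤ Y := fun k => norm_integral_le_of_norm_le hy.norm (hdom k)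
  have hm_lim : Filter.Tendsto m Filter.atTop (nhds 0) := by
    have := tendsto_integral_of_dominated_convergence (μ := volume.restrict (Ioo (0:ℝ) 1))
      (F := fun k x => y x * x ^ ν * (x ^ 2) ^ k) (f := fun _ => (0:ℝ)) (fun x => ‖y x‖)
      (fun k => hz.aestronglyMeasurable.mul
        (by fun_prop : Continuous fun x : ℝ => (x ^ 2) ^ k).aestronglyMeasurable)
      hy.norm hdom ?_
    · simpa using this
    · refine (ae_restrict_iff' measurableSet_Ioo).2 (Filter.Eventually.of_forall fun r hr => ?_)
      have h1 := tendsto_pow_atTop_nhds_zero_of_lt_one (r := r ^ 2) (by positivity)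
        (pow_lt_one₀ hr.1.le hr.2 two_ne_zero)
      simpa using h1.const_mul (y r * r ^ ν)
  set cf : ℕ → ℂ := fun k => ((bA ν k * m k : ℝ) : ℂ) with hcf
  have hcfB : FacBdd cf := by
    refine ⟨1 / Real.Gamma (ν + 1) * Y, fun k => ?_⟩
    have h0 : 0 < Real.Gamma (ν + 1) := Real.Gamma_pos_of_pos (by positivity)
    rw [hcf, Complex.norm_real, norm_mul]
    calc ‖bA ν k‖ * ‖m k‖ ≤ ((1 / Real.Gamma (ν + 1)) / k.factorial) * Y := by
          gcongr
          · exact abs_bA_le hν k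
          · exact hm_bd k
      _ = _ := by ring
  have hfint : ∀ w, PS cf w
      = ∫ x in Ioo (0:ℝ) 1, ((y x * x ^ ν : ℝ) : ℂ) * gB ν ((x:ℂ) ^ 2 * w) := by
    intro w
    have h := swapPS (facBdd_bA hν) (W := fun x => ((y x * x ^ ν : ℝ) : ℂ))
      (ρ := fun x => (x:ℂ) ^ 2) hz.ofReal (by fun_prop) (by
        intro r hr
        rw [norm_pow, Complex.norm_real, Real.norm_of_nonneg hr.1.le]
        exact pow_le_one₀ hr.1.le hr.2.le) w
    refine HasSum.unique ?_ h
    refine (hcfB.hasSum w).congr_fun fun k => ?_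
    have : ∫ x in Ioo (0:ℝ) 1, ((y x * x ^ ν : ℝ) : ℂ) * ((x:ℂ) ^ 2) ^ k = ((m k : ℝ) : ℂ) := by
      rw [hm, ← integral_complex_ofReal]
      refine integral_congr_ae (Filter.Eventually.of_forall fun x => ?_)
      push_cast; rfl
    rw [this, hcf]
    push_cast; ring
  -- zeros of the denominator are zeros of the numerator
  have hzero : ∀ w, gB α w = 0 → PS cf w = 0 := by
    intro w hw
    have him : w.im = 0 := by
      by_contra h; exact gB_ne_of_im hα h hw
    obtain ⟨t, rfl⟩ : ∃ t : ℝ, w = t := ⟨w.re, Complex.ext (by simp) (by simp [him])⟩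
    have ht : 0 < t := by
      by_contra! h
      refine gB_neg_ne hα (t := -t) (by linarith) ?_
      rw [neg_neg]; exact hw
    have hst : 0 < √t := Real.sqrt_pos.2 ht
    have hsq : (2 * √t / 2) ^ 2 = t := by
      rw [mul_div_cancel_left₀ _ two_ne_zero, Real.sq_sqrt ht.le]
    have hJ : besselJ α (2 * √t) = 0 := by
      have := besselJ_eq (a := α) (x := 2 * √t) (by positivity)
      rw [hsq, hw, mul_zero] at this
      exact_mod_cast this
    obtain ⟨n, hn⟩ := hj_all _ (by positivity) hJ
    have hv := congrArg (fun x : ℝ => (x : ℂ)) (hvanish n)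
    simp only [hn] at hv
    rw [← integral_complex_ofReal] at hv
    have e : ∫ x in Ioo (0:ℝ) 1, ((y x * besselJ ν (x * (2 * √t)) : ℝ) : ℂ)
        = (((√t) ^ ν : ℝ) : ℂ) * PS cf t := by
      rw [hfint, ← integral_const_mul]
      refine setIntegral_congr_fun measurableSet_Ioo fun x hx => ?_
      have h1 := besselJ_eq (a := ν) (x := x * (2 * √t)) (mul_pos hx.1 (by positivity))
      have h2 : x * (2 * √t) / 2 = x * √t := by ring
      rw [h2, mul_pow, Real.sq_sqrt ht.le, Real.mul_rpow hx.1.le hst.le] at h1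
      simp only [Complex.ofReal_mul, Complex.ofReal_pow] at h1 ⊢
      rw [h1]; ring
    rw [e, Complex.ofReal_zero] at hv
    exact (mul_eq_zero.1 hv).resolve_left
      (Complex.ofReal_ne_zero.2 (Real.rpow_pos_of_pos hst _).ne')
  obtain ⟨G, hG, hfG⟩ := entire_quot hcfB.differentiable (facBdd_bA hα).differentiable hzero (by
    intro w hw
    change deriv (gB α) w ≠ 0
    rw [(gB_deriv hα w).deriv]
    exact neg_ne_zero.2 (gB_simple hα hw))
  change ∀ z, PS cf z = G z * gB α z at hfG
  obtain ⟨C, hC0, hC⟩ := gB_big_bound hα hαν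
  obtain ⟨c0, c1, hc⟩ := affine_of_bound hG (C := C * Y) (by positivity) (by
    intro w hw
    have hg : 0 < ‖gB α w‖ := norm_pos_iff.2 (gB_ne_of_im hα hw)
    set S := (1 + 2 * (‖w‖ ^ 2 / |w.im|)) with hS
    have h1 : ‖PS cf w‖ ≤ (C * (S * ‖gB α w‖)) * Y := by
      rw [hfint, hY, ← integral_const_mul]
      refine norm_integral_le_of_norm_le (hy.norm.const_mul _) ?_
      refine (ae_restrict_iff' measurableSet_Ioo).2 (Filter.Eventually.of_forall fun x hx => ?_)
      have h2 := hC w hw x hx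
      rw [norm_mul, Complex.norm_real, norm_mul, Real.norm_of_nonneg (Real.rpow_nonneg hx.1.le ν),
        mul_assoc, mul_comm]
      gcongr
    rw [hfG, norm_mul] at h1
    refine le_of_mul_le_mul_right (h1.trans (le_of_eq ?_)) hg
    ring)
  have hcoef : ∀ k, cf k = c0 * bA α k + c1 * shC α k := by
    intro k
    obtain ⟨K1, h1⟩ := id hcfB
    obtain ⟨K2, h2⟩ := facBdd_bA hα
    obtain ⟨K3, h3⟩ := facBdd_shC hα
    have hB : FacBdd (fun k => cf k - (c0 * bA α k + c1 * shC α k)) := by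
      refine ⟨K1 + (‖c0‖ * K2 + ‖c1‖ * K3), fun k => ?_⟩
      calc _ ≤ ‖cf k‖ + (‖c0‖ * ‖(bA α k : ℂ)‖ + ‖c1‖ * ‖shC α k‖) := by
            rw [← norm_mul, ← norm_mul]
            exact (norm_sub_le _ _).trans (by gcongr; exact norm_add_le _ _)
        _ ≤ K1 / k.factorial + (‖c0‖ * (K2 / k.factorial) + ‖c1‖ * (K3 / k.factorial)) := by
            gcongr
            · exact h1 k
            · exact h2 k
            · exact h3 k
        _ = _ := by ring
    refine sub_eq_zero.1 (PS_unique k hB fun w => ?_)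
    have hs := (hcfB.hasSum w).sub ((((facBdd_bA hα).hasSum w).mul_left c0).add
      (((facBdd_shC hα).hasSum w).mul_left c1))
    refine (hB.hasSum w).unique ?_
    have e : (0:ℂ) = PS cf w - (c0 * PS (fun k => (bA α k : ℂ)) w + c1 * PS (shC α) w) := by
      rw [PS_shC hα, hfG, hc]
      change (0:ℂ) = _ - (c0 * gB α w + _)
      ring
    rw [e]
    exact hs.congr_fun fun k => by ring
  set Mo : ℕ → ℝ := fun k => bA ν k / bA α k * m k with hMo
  have hMo_lim : Filter.Tendsto Mo Filter.atTop (nhds 0) := by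
    refine squeeze_zero_norm (a := fun k => |bA ν 0 / bA α 0| * |m k|) (fun k => ?_) ?_
    · rw [hMo, Real.norm_eq_abs, abs_mul]
      exact mul_le_mul_of_nonneg_right (bA_ratio hα hαν k) (abs_nonneg _)
    · simpa using hm_lim.abs.const_mul |bA ν 0 / bA α 0|
  have hMs : ∀ k : ℕ, ((Mo (k + 1) : ℝ) : ℂ) = c0 - c1 * ((k + 1) * (α + k + 1)) := by
    intro k
    have h1 := hcoef (k + 1)
    have h2 := Complex.ofReal_ne_zero.2 (bA_ne hα (k + 1))
    simp only [shC, hcf] at h1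
    rw [bA_prev hα k] at h1
    simp only [hMo]
    push_cast at h1 ⊢
    rw [div_mul_eq_mul_div, h1]
    field_simp
    ring
  have hlimC : ∀ i : ℕ, Filter.Tendsto (fun k : ℕ => ((Mo (k + i + 1) : ℝ) : ℂ)) Filter.atTop
      (nhds 0) := by
    intro i
    have h1 := (Complex.continuous_ofReal.tendsto 0).comp
      (hMo_lim.comp (Filter.tendsto_add_atTop_nat (i + 1)))
    rw [Complex.ofReal_zero] at h1
    exact h1
  have hc1 : c1 = 0 := by
    have h1 := ((hlimC 2).sub ((hlimC 1).const_mul 2)).add (hlimC 0)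
    have h2 : Filter.Tendsto (fun _ : ℕ => -2 * c1) Filter.atTop (nhds (0 - 2 * 0 + 0)) := by
      refine h1.congr fun k => ?_
      rw [hMs, hMs, hMs]; push_cast; ring
    have h3 := tendsto_nhds_unique h2 tendsto_const_nhds
    simp at h3
    exact h3
  have hc0 : c0 = 0 := by
    have h2 : Filter.Tendsto (fun _ : ℕ => c0) Filter.atTop (nhds 0) := by
      refine (hlimC 0).congr fun k => ?_
      rw [hMs, hc1]; ring
    exact tendsto_nhds_unique tendsto_const_nhds h2
  refine moments_zero hν hy fun k => ?_
  have h1 := hcoef k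
  rw [hc0, hc1, zero_mul, zero_mul, add_zero] at h1
  simp only [hcf] at h1
  have h2 : bA ν k * m k = 0 := by exact_mod_cast h1
  exact (mul_eq_zero.1 h2).resolve_left (bA_ne hν k)
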